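/- Let J(x) denote the number of Jordan–Pólya numbers not exceeding x. Then for every ε > 0 there exists x_2 such that for all x ≥ x_2, J(x) > exp((2−ε)·√(log x)/(log log x)). -/

import Mathlib

def JordanPolya (n : ℕ) : Prop :=
  ∃ s : Multiset ℕ, (∀ m ∈ s, 2 ≤ m) ∧ (s.map Nat.factorial).prod = n

theorem Nat.Prime.dvd_prod_map_factorial_iff {p : ℕ} (hp : p.Prime) (s : Multiset ℕ) :
    p ∣ (s.map Nat.factorial).prod ↔ ∃ m ∈ s, p ≤ m := by
  constructor
  · intro h
    obtain ⟨_, ha, hpa⟩ := hp.prime.exists_mem_multiset_dvd h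
    obtain ⟨m, hm, rfl⟩ := Multiset.mem_map.1 ha
    exact ⟨m, hm, hp.dvd_factorial.1 hpa⟩
  · rintro ⟨m, hm, hpm⟩
    exact (hp.dvd_factorial.2 hpm).trans (Multiset.dvd_prod (Multiset.mem_map_of_mem _ hm))

/-- A product of factorials of primes determines the multiset of those primes. -/
theorem prod_map_factorial_injOn_primes (s t : Multiset ℕ) (hs : ∀ p ∈ s, p.Prime)
    (ht : ∀ p ∈ t, p.Prime)
    (h : (s.map Nat.factorial).prod = (t.map Nat.factorial).prod) : s = t := by
  induction hn : s.card generalizing s t with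
  | zero =>
    obtain rfl := Multiset.card_eq_zero.1 hn
    refine (Multiset.eq_zero_of_forall_notMem fun m hm ↦ ?_).symm
    have hdvd := ((ht m hm).dvd_prod_map_factorial_iff t).2 ⟨m, hm, le_rfl⟩
    rw [← h] at hdvd
    simpa using ((ht m hm).dvd_prod_map_factorial_iff 0).1 hdvd
  | succ n ih =>
    have hne : s.toFinset.Nonempty := by
      rw [Multiset.toFinset_nonempty]
      rintro rfl
      simp at hn
    obtain ⟨q, hq, hmax⟩ := s.toFinset.exists_max_image id hne
    simp only [Multiset.mem_toFinset, id] at hq hmax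
    have hdvd := ((hs q hq).dvd_prod_map_factorial_iff s).2 ⟨q, hq, le_rfl⟩
    rw [h, (hs q hq).dvd_prod_map_factorial_iff] at hdvd
    obtain ⟨m, hm, hqm⟩ := hdvd
    have hdvd' := ((ht m hm).dvd_prod_map_factorial_iff t).2 ⟨m, hm, le_rfl⟩
    rw [← h, (ht m hm).dvd_prod_map_factorial_iff] at hdvd'
    obtain ⟨m', hm', hmm'⟩ := hdvd'
    obtain rfl : m = q := le_antisymm (hmm'.trans (hmax m' hm')) hqm
    obtain ⟨s', rfl⟩ := Multiset.exists_cons_of_mem hq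
    obtain ⟨t', rfl⟩ := Multiset.exists_cons_of_mem hm
    rw [Multiset.map_cons, Multiset.map_cons, Multiset.prod_cons, Multiset.prod_cons] at h
    congr 1
    exact ih s' t' (fun p hp ↦ hs p (Multiset.mem_cons_of_mem hp))
      (fun p hp ↦ ht p (Multiset.mem_cons_of_mem hp))
      (Nat.eq_of_mul_eq_mul_left m.factorial_pos h) (by simpa using hn)

/-- If there are more than `k` primes up to `N`, then the products of `k` factorials of such primes
provide at least `k.centralBinom` Jordan–Pólya numbers up to `N ! ^ k`. -/
theorem centralBinom_le_ncard_jordanPolya {N k : ℕ} {x : ℝ} (hk : k + 1 ≤ Nat.primeCounting N)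
    (hx : ((N.factorial : ℝ)) ^ k ≤ x) :
    k.centralBinom ≤ Set.ncard {n : ℕ | 0 < n ∧ JordanPolya n ∧ (n : ℝ) ≤ x} := by
  classical
  let f : Sym N.primesLE k → ℕ := fun s ↦
    (((s : Multiset N.primesLE).map Subtype.val).map Nat.factorial).prod
  have hprime (s : Multiset N.primesLE) : ∀ p ∈ s.map Subtype.val, p.Prime := by
    intro p hp
    obtain ⟨a, -, rfl⟩ := Multiset.mem_map.1 hp
    exact Nat.prime_of_mem_primesLE a.2
  have hf : Function.Injective f := fun s t h ↦ Subtype.ext <|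
    Multiset.map_injective Subtype.val_injective <|
      prod_map_factorial_injOn_primes _ _ (hprime _) (hprime _) h
  have hle (s : Sym N.primesLE k) : f s ≤ N.factorial ^ k := by
    refine (Multiset.prod_le_pow_card _ N.factorial ?_).trans_eq (by simp)
    intro m hm
    simp only [Multiset.mem_map] at hm
    obtain ⟨_, ⟨a, -, rfl⟩, rfl⟩ := hm
    exact Nat.factorial_le (Nat.mem_primesLE.1 a.2).1
  have hpos (s : Sym N.primesLE k) : 0 < f s := by
    refine Nat.pos_of_ne_zero (Multiset.prod_ne_zero ?_)
    simp [Nat.factorial_ne_zero]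
  have hfin : Set.Finite {n : ℕ | 0 < n ∧ JordanPolya n ∧ (n : ℝ) ≤ x} :=
    (Set.finite_Iic ⌊x⌋₊).subset fun n hn ↦ Nat.le_floor hn.2.2
  calc k.centralBinom ≤ (Nat.primeCounting N + k - 1).choose k := by
        rw [Nat.centralBinom_eq_two_mul_choose]
        exact Nat.choose_le_choose k (by lia)
    _ = Fintype.card (Sym N.primesLE k) := by
        rw [Sym.card_sym_eq_choose, Fintype.card_coe, Nat.primesLE_card_eq_primeCounting]
    _ = (Set.range f).ncard := by
        rw [← Set.image_univ, Set.ncard_image_of_injective _ hf, Set.ncard_univ,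
          Nat.card_eq_fintype_card]
    _ ≤ _ := by
        refine Set.ncard_le_ncard ?_ hfin
        rintro _ ⟨s, rfl⟩
        refine ⟨hpos s, ⟨_, fun m hm ↦ (hprime _ m hm).two_le, rfl⟩, le_trans ?_ hx⟩
        exact_mod_cast hle s

/-- The counting bound in terms of `u = √(log x)`, for `u` large compared with `log u ^ 2`. -/
theorem exp_lt_ncard_jordanPolya {u x : ℝ} (hl : 4 ≤ Real.log u)
    (hu : 1000 * Real.log u ^ 2 ≤ u) (hx : Real.exp (u ^ 2) ≤ x) :
    Real.exp (u / Real.log u) <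
      (Set.ncard {n : ℕ | 0 < n ∧ JordanPolya n ∧ (n : ℝ) ≤ x} : ℝ) := by
  set l := Real.log u
  have hu0 : 0 < u := by nlinarith
  have hlu : 4000 * l ≤ u := by nlinarith
  have hlog2 := Real.log_two_gt_d9
  have hlog2' := Real.log_two_lt_d9
  have hy : Real.log (1.2 * u) ≤ 1.05 * l := by
    rw [Real.log_mul (by norm_num) hu0.ne']
    linarith [Real.log_le_sub_one_of_pos (show (0 : ℝ) < 1.2 by norm_num)]
  have hy0 : 0 < Real.log (1.2 * u) := Real.log_pos (by linarith)
  have hy2 : Real.log (1.2 * u + 2) ≤ l + 1 := by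
    calc Real.log (1.2 * u + 2) ≤ Real.log (2 * u) :=
          Real.log_le_log (by linarith) (by linarith)
      _ = Real.log 2 + l := Real.log_mul (by norm_num) hu0.ne'
      _ ≤ l + 1 := by linarith
  set k := ⌊0.75 * (u / l)⌋₊
  have hul : 1000 * l ≤ u / l := by
    rw [le_div_iff₀ (by linarith)]
    linarith
  have hkle : (k : ℝ) ≤ 0.75 * (u / l) := Nat.floor_le (by positivity)
  have hkgt : 0.75 * (u / l) < k + 1 := Nat.lt_floor_add_one _
  have hkl : (k : ℝ) * l ≤ 0.75 * u := by
    calc (k : ℝ) * l ≤ 0.75 * (u / l) * l := by gcongr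
      _ = 0.75 * u := by field_simp
  have hk1 : (1 : ℝ) ≤ k := by linarith
  have hkpi : k + 1 ≤ Nat.primeCounting ⌊1.2 * u⌋₊ := by
    have h := Chebyshev.pi_ge' (show 1 < 1.2 * u by linarith)
    rw [div_le_iff₀ hy0] at h
    by_contra! hlt
    have hlt' : (Nat.primeCounting ⌊1.2 * u⌋₊ : ℝ) ≤ k := by exact_mod_cast Nat.le_of_lt_succ hlt
    have : (Nat.primeCounting ⌊1.2 * u⌋₊ : ℝ) * Real.log (1.2 * u) ≤ k * (1.05 * l) := by gcongr
    nlinarith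
  have hfac : ((⌊1.2 * u⌋₊.factorial : ℝ)) ^ k ≤ x := by
    refine le_trans ?_ hx
    have hN : ((⌊1.2 * u⌋₊ : ℕ) : ℝ) ≤ 1.2 * u := Nat.floor_le (by positivity)
    calc ((⌊1.2 * u⌋₊.factorial : ℝ)) ^ k
        ≤ (((⌊1.2 * u⌋₊ : ℕ) : ℝ) ^ ⌊1.2 * u⌋₊) ^ k := by
          gcongr
          exact_mod_cast Nat.factorial_le_pow _
      _ ≤ ((1.2 * u) ^ ⌊1.2 * u⌋₊) ^ k := by gcongr
      _ = Real.exp (k * (⌊1.2 * u⌋₊ * Real.log (1.2 * u))) := by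
          rw [Real.exp_nat_mul, Real.exp_nat_mul, Real.exp_log (by positivity)]
      _ ≤ Real.exp (u ^ 2) := by
          gcongr
          calc (k : ℝ) * (⌊1.2 * u⌋₊ * Real.log (1.2 * u))
              ≤ k * (1.2 * u * (1.05 * l)) := by gcongr
            _ = 1.26 * u * (k * l) := by ring
            _ ≤ 1.26 * u * (0.75 * u) := by gcongr
            _ ≤ u ^ 2 := by nlinarith
  refine lt_of_lt_of_le ?_ (Nat.cast_le.2 (centralBinom_le_ncard_jordanPolya hkpi hfac))
  have hk0 : 0 < k := by exact_mod_cast hk1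
  have hcb : (4 : ℝ) ^ k ≤ 2 * k * k.centralBinom := by
    exact_mod_cast Nat.four_pow_le_two_mul_self_mul_centralBinom k hk0
  have h2k : Real.log (2 * k) ≤ l + 1 := by
    calc Real.log (2 * k) ≤ Real.log (2 * u) := by
          apply Real.log_le_log (by linarith)
          nlinarith
      _ = Real.log 2 + l := Real.log_mul (by norm_num) hu0.ne'
      _ ≤ l + 1 := by linarith
  have hlog4 : Real.log 4 = 2 * Real.log 2 := by
    rw [show (4 : ℝ) = 2 ^ 2 by norm_num, Real.log_pow]
    norm_num
  have hexp : Real.exp (u / l) * (2 * k) < 4 ^ k := by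
    rw [← Real.exp_log (show (0 : ℝ) < 2 * k by linarith), ← Real.exp_add,
      ← Real.exp_log (show (0 : ℝ) < 4 by norm_num), ← Real.exp_nat_mul, Real.exp_lt_exp, hlog4]
    nlinarith
  have := hexp.trans_le hcb
  rw [mul_comm] at this
  exact lt_of_mul_lt_mul_left this (by linarith)

theorem jp_counting_lower (ε : ℝ) (hε : 0 < ε) :
    ∃ x₂ : ℝ, ∀ x : ℝ, x₂ ≤ x →
      ((Set.ncard {n : ℕ | 0 < n ∧ JordanPolya n ∧ (n : ℝ) ≤ x} : ℝ)) >
        Real.exp ((2 - ε) * Real.sqrt (Real.log x) / Real.log (Real.log x)) := by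
  have hu : Filter.Tendsto (fun x : ℝ ↦ √(Real.log x)) Filter.atTop Filter.atTop :=
    Real.tendsto_sqrt_atTop.comp Real.tendsto_log_atTop
  have hsmall : ∀ᶠ u : ℝ in Filter.atTop, 1000 * Real.log u ^ 2 ≤ u := by
    have h := (isLittleO_log_rpow_rpow_atTop 2 (zero_lt_one (α := ℝ))).bound
      (show (0 : ℝ) < 1 / 1000 by norm_num)
    filter_upwards [h, Filter.eventually_ge_atTop 0] with u h hu0
    simp only [Real.rpow_one, Real.rpow_two, Real.norm_eq_abs, abs_of_nonneg hu0,
      abs_of_nonneg (sq_nonneg (Real.log u))] at h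
    linarith
  rw [← Filter.eventually_atTop]
  filter_upwards [hu.eventually hsmall,
    hu.eventually (Real.tendsto_log_atTop.eventually_ge_atTop 4),
    Filter.eventually_gt_atTop 1] with x h1 h2 h3
  have hL : 0 < Real.log x := Real.log_pos h3
  have hsq : √(Real.log x) ^ 2 = Real.log x := Real.sq_sqrt hL.le
  refine lt_of_le_of_lt ?_ (exp_lt_ncard_jordanPolya h2 h1 (by rw [hsq, Real.exp_log (by linarith)]))
  have hll : Real.log (Real.log x) = 2 * Real.log √(Real.log x) := by
    rw [← hsq, Real.log_pow, hsq]
    norm_num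
  rw [hll, Real.exp_le_exp, div_le_div_iff₀ (by linarith) (by linarith)]
  have := Real.sqrt_nonneg (Real.log x)
  nlinarith [mul_nonneg hε.le (mul_nonneg this (by linarith : 0 ≤ Real.log √(Real.log x)))]
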